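/- arXiv:1301.1235 — 2 statements merged into one kernel-verified Lean document; each statement's English description precedes it below -/
import Mathlib

section
/- Assume the vertex c is controllable. Then, with δ_{cv} the adjusting shifts, for every equivalence class 𝒯_i the vector field ∑_{v∈𝒯_i} (q_c − q_v + δ_{cv}) ∂_{p_v} belongs to 𝓜. -/
open scoped Classical
open Polynomial

noncomputable section

/-- Phase space ℝ^{2|V|}: positions `q = x.1` and momenta `p = x.2`. -/
abbrev Phase (V : Type) := (V → ℝ) × (V → ℝ)

/-- Lie bracket of vector fields: `[Y,Z](x) = DZ(x)·Y(x) − DY(x)·Z(x)`. -/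
def lieB {V : Type} [Fintype V] (Y Z : Phase V → Phase V) : Phase V → Phase V :=
  fun x => fderiv ℝ Z x (Y x) - fderiv ℝ Y x (Z x)

/-- The constant vector field `∂_{p_v}`. -/
def dp {V : Type} [Fintype V] [DecidableEq V] (v : V) : Phase V → Phase V :=
  fun _ => (0, Pi.single v 1)

/-- The constant vector field `∂_{q_v}`. -/
def dq {V : Type} [Fintype V] [DecidableEq V] (v : V) : Phase V → Phase V :=
  fun _ => (Pi.single v 1, 0)

/-- The constant vector field `∑_{v ∈ A} ∂_{p_v}`. -/
def dpSum {V : Type} [Fintype V] [DecidableEq V] (A : Finset V) : Phase V → Phase V :=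
  fun _ => (0, ∑ v ∈ A, Pi.single v 1)

/-- The constant vector field `∑_{v ∈ A} ∂_{q_v}`. -/
def dqSum {V : Type} [Fintype V] [DecidableEq V] (A : Finset V) : Phase V → Phase V :=
  fun _ => (∑ v ∈ A, Pi.single v 1, 0)

/-- The drift vector field
`X₀ = −∑_{v∈V*} γ_v p_v ∂_{p_v} + ∑_{v∈V} (p_v ∂_{q_v} − U_v'(q_v) ∂_{p_v})
      − ∑_{{u,v}∈E} V_{uv}'(q_u − q_v)(∂_{p_u} − ∂_{p_v})`,
written componentwise (using the symmetry `V_{vu}(x) = V_{uv}(−x)` of the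
interaction potentials, the `∂_{p_v}`-component of the edge term at a vertex `v` is
`−∑_{w ~ v} V_{vw}'(q_v − q_w)`). -/
def X0 {V : Type} [Fintype V] [DecidableEq V] (G : SimpleGraph V) [DecidableRel G.Adj]
    (γ : V → ℝ) (U : V → ℝ → ℝ) (Vp : V → V → Polynomial ℝ) : Phase V → Phase V :=
  fun x =>
    (x.2, fun v =>
      -(γ v) * x.2 v - deriv (U v) (x.1 v) -
        ∑ w ∈ Finset.univ.filter (fun w => G.Adj v w),
          (derivative (Vp v w)).eval (x.1 v - x.1 w))

/-- The smallest collection `𝓜` of vector fields on `ℝ^{2|V|}` that contains `∂_{p_v}`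
for every `v ∈ V*`, and is closed under linear combinations, Lie brackets,
bracketing with `X₀`, and multiplication by smooth scalar functions. -/
inductive MM {V : Type} [Fintype V] [DecidableEq V] (Vstar : Finset V)
    (X₀ : Phase V → Phase V) : (Phase V → Phase V) → Prop
  | basic (v : V) (hv : v ∈ Vstar) : MM Vstar X₀ (dp v)
  | add {Y Z : Phase V → Phase V} : MM Vstar X₀ Y → MM Vstar X₀ Z → MM Vstar X₀ (Y + Z)
  | smul (a : ℝ) {Y : Phase V → Phase V} : MM Vstar X₀ Y → MM Vstar X₀ (a • Y)
  | lie {Y Z : Phase V → Phase V} : MM Vstar X₀ Y → MM Vstar X₀ Z → MM Vstar X₀ (lieB Y Z)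
  | lieX {Y : Phase V → Phase V} : MM Vstar X₀ Y → MM Vstar X₀ (lieB Y X₀)
  | mulS (f : Phase V → ℝ) (hf : ContDiff ℝ (⊤ : ℕ∞) f) {Y : Phase V → Phase V} :
      MM Vstar X₀ Y → MM Vstar X₀ (fun x => f x • Y x)

/-- A vertex `v` is controllable if `∂_{q_v} ∈ 𝓜` and `∂_{p_v} ∈ 𝓜`. -/
def Controllable {V : Type} [Fintype V] [DecidableEq V] (Vstar : Finset V)
    (X₀ : Phase V → Phase V) (v : V) : Prop :=
  MM Vstar X₀ (dq v) ∧ MM Vstar X₀ (dp v)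

/-- Two polynomials are equivalent if `f(·) = g(· + δ)` for some `δ ∈ ℝ`. -/
def PolyEquiv (f g : Polynomial ℝ) : Prop :=
  ∃ δ : ℝ, ∀ x : ℝ, f.eval x = g.eval (x + δ)

/-- The set 𝒯 of neighbors ("targets") of a vertex `c`. -/
def Tset {V : Type} [Fintype V] [DecidableEq V] (G : SimpleGraph V) [DecidableRel G.Adj]
    (c : V) : Finset V :=
  Finset.univ.filter fun w => G.Adj c w

/-- The shift making a polynomial `g = ∑ a_i t^i/i!` of degree `k` adjusted
(i.e. killing the coefficient `a_{k−1}`), namely `a_{k−1}/a_k = coeff_{k−1}/(k·coeff_k)`. -/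
def adjShift (g : Polynomial ℝ) : ℝ :=
  g.coeff (g.natDegree - 1) / ((g.natDegree : ℝ) * g.leadingCoeff)

/-- The adjusted representation `g̃(·) = g(· − a_{k−1}/a_k)` of a polynomial `g`. -/
def adjRep (g : Polynomial ℝ) : Polynomial ℝ :=
  g.comp (Polynomial.X - Polynomial.C (adjShift g))

/-- `f̃_v`, the adjusted representation of `V''_{cv}`. -/
def ft {V : Type} (Vp : V → V → Polynomial ℝ) (c v : V) : Polynomial ℝ :=
  adjRep (derivative (derivative (Vp c v)))

/-- `d = max_{v∈𝒯} d_v`, the maximal degree of the adjusted polynomials `f̃_v`, `v ∈ 𝒯`. -/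
def dmax {V : Type} [Fintype V] [DecidableEq V] (G : SimpleGraph V) [DecidableRel G.Adj]
    (Vp : V → V → Polynomial ℝ) (c : V) : ℕ :=
  (Tset G c).sup fun v => (ft Vp c v).natDegree

/-- `D^d = {v ∈ 𝒯 : d_v = d}`, the neighbors of `c` of maximal adjusted degree. -/
def Dd {V : Type} [Fintype V] [DecidableEq V] (G : SimpleGraph V) [DecidableRel G.Adj]
    (Vp : V → V → Polynomial ℝ) (c : V) : Finset V :=
  (Tset G c).filter fun v => (ft Vp c v).natDegree = dmax G Vp c

/-- The coefficient `b_{vℓ}` in `f̃_v(x) = ∑_j b_{vj} x^j/j!`, i.e. `b_{vℓ} = ℓ!·coeff_ℓ(f̃_v)`. -/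
def bcoef {V : Type} (Vp : V → V → Polynomial ℝ) (c v : V) (ℓ : ℕ) : ℝ :=
  (Nat.factorial ℓ : ℝ) * (ft Vp c v).coeff ℓ

/-- The scalar function `x_v = q_c − q_v + δ_{cv}`, with `δ_{cv}` the adjusting shift
of `V''_{cv}`. -/
def xv {V : Type} [Fintype V] (Vp : V → V → Polynomial ℝ) (c v : V) : Phase V → ℝ :=
  fun x => x.1 c - x.1 v + adjShift (derivative (derivative (Vp c v)))

/-!
Call a tuple `g = (g_v)_v` of polynomials *admissible* if
`∑_v g_v(x_v) ∂_{p_v} ∈ 𝓜`, where `x_v = q_c - q_v + δ_{cv}`. Bracketing with `∂_{q_c}` shows that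
admissible tuples are stable under the componentwise derivative, and `[h, [g, X₀]] = (g h)'` that
they are stable under `(g, h) ↦ (g h)'`. The tuple of adjusted polynomials `f̃_v` is admissible: it
is `[∂_{q_c}, X₀]` up to a multiple of `∂_{p_c}`.

If `(s_v X)_v` is admissible, the operator `h ↦ (s X h)'` is diagonal on monomials, with eigenvalue
`s_v (n + 1)` on `X ^ n` at `v`; interpolating its eigenvalues selects monomials and vertices at
will. The first such `s` comes from the top degree `k`: since the `f̃_v` are adjusted, the
`(k - 1)`-st derivative at `v` has the form `α X + β` with `α β = 0`, so the derivative of its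
square is `2 α² X`. This separates the vertices of top degree, and by induction those of every
degree. Extracting the coefficients of the `f̃_v` of a given degree one by one then isolates the
vertices at which `f̃_v` is a prescribed polynomial, and these are the equivalence classes.
-/

lemma sum_smul_mem_of_eigenvectors {K M ι : Type*} [Field K] [AddCommGroup M] [Module K M]
    {L : Module.End K M} {A : Submodule K M} (hA : A ≤ A.comap L) {s : Finset ι} {x : ι → M}
    {μ : ι → K} (hx : ∀ i ∈ s, L (x i) = μ i • x i) (hsum : ∑ i ∈ s, x i ∈ A) (φ : K → K) :
    ∑ i ∈ s, φ (μ i) • x i ∈ A := by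
  let p : K[X] := Lagrange.interpolate (s.image μ) id φ
  have hp : ∀ i ∈ s, p.eval (μ i) = φ (μ i) := fun i hi =>
    Lagrange.eval_interpolate_at_node φ Function.injective_id.injOn (Finset.mem_image_of_mem μ hi)
  have hLp : aeval L p (∑ i ∈ s, x i) = ∑ i ∈ s, φ (μ i) • x i := by
    rw [map_sum]
    refine Finset.sum_congr rfl fun i hi => ?_
    rw [Module.End.aeval_apply_of_mem_apply_eq_smul (hx i hi), hp i hi]
  exact hLp ▸ aeval_apply_smul_mem_of_le_comap hsum p L hA

lemma derivative_mul_self_of_natDegree_le_one {R : Type*} [CommRing R] {p : R[X]}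
    (hp : p.natDegree ≤ 1) (hcoeff : p.coeff 1 * p.coeff 0 = 0) :
    derivative (p * p) = monomial 1 (2 * p.coeff 1 ^ 2) := by
  obtain ⟨a, b, rfl⟩ : ∃ a b, p = C a * X + C b := ⟨_, _, eq_X_add_C_of_natDegree_le_one hp⟩
  have hab : C a * C b = 0 := by
    rw [← C_mul, show a * b = 0 by simpa using hcoeff, C_0]
  have hsq : (C a * X + C b) * (C a * X + C b) = C (a ^ 2) * X ^ 2 + C (b ^ 2) := by
    rw [C_pow, C_pow]
    linear_combination 2 * X * hab
  have hone : (C a * X + C b).coeff 1 = a := by simp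
  rw [hsq, derivative_add, derivative_C, C_mul_X_pow_eq_monomial, derivative_monomial,
    add_zero, mul_comm, hone, Nat.cast_ofNat]

section DerivClosed

variable {K V : Type*} [Field K]

/-- The closure properties shared by the spaces of tuples of polynomials considered here:
stability under the componentwise derivative and under `(g, h) ↦ (g h)'`. -/
structure DerivClosed (A : Submodule K (V → K[X])) : Prop where
  derivative_mem : ∀ g ∈ A, (fun v => derivative (g v)) ∈ A
  derivative_mul_mem : ∀ g ∈ A, ∀ h ∈ A, (fun v => derivative (g v * h v)) ∈ A

/-- The coefficient tuples `a` for which the tuple of monomials `(a_v X ^ n)_v` lies in `A`. -/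
def monomialCoeffs (A : Submodule K (V → K[X])) (n : ℕ) : Submodule K (V → K) :=
  A.comap ((monomial n).compLeft V)

lemma mem_monomialCoeffs {A : Submodule K (V → K[X])} {n : ℕ} {a : V → K} :
    a ∈ monomialCoeffs A n ↔ (fun v => monomial n (a v)) ∈ A :=
  Iff.rfl

namespace DerivClosed

variable {A : Submodule K (V → K[X])}

lemma iterate_derivative_mem (hA : DerivClosed A) {g : V → K[X]} (hg : g ∈ A) (k : ℕ) :
    (fun v => derivative^[k] (g v)) ∈ A := by
  induction k with
  | zero => exact hg
  | succ k ih =>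
    simp only [Function.iterate_succ_apply']
    exact hA.derivative_mem _ ih

/-- The operator `h ↦ (s X h)'` is diagonal on monomials, with eigenvalue `s_v (n + 1)` on the
monomial `X ^ n` at `v`. -/
lemma mem_of_coeff_eq [Finite V] (hA : DerivClosed A) {s : V → K} (hs : s ∈ monomialCoeffs A 1)
    {h : V → K[X]} (hh : h ∈ A) (φ : K → K) {r : V → K[X]}
    (hr : ∀ v n, (r v).coeff n = φ (s v * (n + 1)) * (h v).coeff n) : r ∈ A := by
  cases nonempty_fintype V
  let L : Module.End K (V → K[X]) := LinearMap.pi fun v =>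
    derivative ∘ₗ LinearMap.mulLeft K (monomial 1 (s v)) ∘ₗ LinearMap.proj v
  obtain ⟨N, hN⟩ := Finite.exists_le fun v => (h v).natDegree
  let I : Finset (V × ℕ) := Finset.univ ×ˢ Finset.range (N + 1)
  let x : V × ℕ → V → K[X] := fun i => Pi.single i.1 (monomial i.2 ((h i.1).coeff i.2))
  let μ : V × ℕ → K := fun i => s i.1 * (i.2 + 1)
  have hsum : ∀ (ψ : V × ℕ → K) (g : V → K[X]),
      (∀ v n, (g v).coeff n = ψ (v, n) * (h v).coeff n) → ∑ i ∈ I, ψ i • x i = g := by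
    intro ψ g hg
    funext v
    ext n
    have hn : N < n → (h v).coeff n = 0 := fun hn =>
      coeff_eq_zero_of_natDegree_lt ((hN v).trans_lt hn)
    simp only [I, x, Finset.sum_product, Finset.sum_apply, Pi.smul_apply, finsetSum_coeff,
      coeff_smul, hg]
    rw [Finset.sum_eq_single v (by simp +contextual) (by simp)]
    simp +contextual [coeff_monomial, hn]
  have hL : ∀ i ∈ I, L (x i) = μ i • x i := by
    rintro ⟨v, n⟩ -
    funext w
    obtain rfl | hw := eq_or_ne w v
    · simp [L, x, μ, monomial_mul_monomial, smul_monomial, add_comm, mul_right_comm]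
    · simp [L, x, hw]
  have hLA : A ≤ A.comap L := fun g hg => hA.derivative_mul_mem _ hs _ hg
  have hxA : ∑ i ∈ I, x i ∈ A := by simpa [← hsum 1 h (by simp)] using hh
  exact hsum (fun i => φ (μ i)) r hr ▸ sum_smul_mem_of_eigenvectors hLA hL hxA φ

variable [CharZero K]

lemma mem_monomialCoeffs_of_succ (hA : DerivClosed A) {n : ℕ} {a : V → K}
    (ha : a ∈ monomialCoeffs A (n + 1)) : a ∈ monomialCoeffs A n := by
  rw [← Submodule.smul_mem_iff _ (Nat.cast_add_one_ne_zero n : (n + 1 : K) ≠ 0)]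
  simpa [mem_monomialCoeffs, derivative_monomial, mul_comm] using hA.derivative_mem _ ha

lemma mem_monomialCoeffs_one (hA : DerivClosed A) {n : ℕ} (hn : n ≠ 0) {a : V → K}
    (ha : a ∈ monomialCoeffs A n) : a ∈ monomialCoeffs A 1 := by
  induction n, Nat.one_le_iff_ne_zero.2 hn using Nat.le_induction with
  | base => exact ha
  | succ n hn ih => exact ih (by omega) (hA.mem_monomialCoeffs_of_succ ha)

lemma mul_mem_monomialCoeffs (hA : DerivClosed A) {m n : ℕ} {a b : V → K}
    (ha : a ∈ monomialCoeffs A (m + 1)) (hb : b ∈ monomialCoeffs A n) :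
    a * b ∈ monomialCoeffs A (m + n) := by
  rw [← Submodule.smul_mem_iff _ (Nat.cast_add_one_ne_zero (m + n) : ((m + n : ℕ) + 1 : K) ≠ 0),
    mem_monomialCoeffs]
  convert hA.derivative_mul_mem _ ha _ hb using 2 with v
  simp only [LinearMap.compLeft_apply, Function.comp_apply, monomial_mul_monomial,
    derivative_monomial, add_right_comm m 1 n, Nat.add_sub_cancel]
  simp [mul_comm]

variable [Finite V]

lemma mul_comp_mem (hA : DerivClosed A) {s t : V → K} (hs : s ∈ monomialCoeffs A 1)
    (ht : t ∈ monomialCoeffs A 1) (φ : K → K) : (fun v => t v * φ (s v)) ∈ monomialCoeffs A 1 := by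
  refine hA.mem_of_coeff_eq hs ht (fun x => φ (x / 2)) fun v n => ?_
  obtain rfl | hn := eq_or_ne n 1
  · norm_num [coeff_monomial, mul_comm]
  · simp [coeff_monomial, hn.symm]

lemma indicator_ne_zero_mem (hA : DerivClosed A) {s : V → K} (hs : s ∈ monomialCoeffs A 1) :
    {v | s v ≠ 0}.indicator 1 ∈ monomialCoeffs A 1 := by
  convert hA.mul_comp_mem hs hs (·⁻¹) using 1
  funext v
  by_cases hv : s v = 0 <;> simp [hv]

section Indicator

variable {T : Set V}

lemma indicator_inter_mem (hA : DerivClosed A) (hT : T.indicator 1 ∈ monomialCoeffs A 1)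
    {b : V → K} (hb : T.indicator b ∈ monomialCoeffs A 1) (t : K) :
    (T ∩ {v | b v = t}).indicator 1 ∈ monomialCoeffs A 1 := by
  convert hA.mul_comp_mem hb hT (fun x => if x = t then 1 else 0) using 1
  funext v
  by_cases hv : v ∈ T <;> simp [hv, Set.indicator_apply]

lemma indicator_mem (hA : DerivClosed A) (hT : T.indicator 1 ∈ monomialCoeffs A 1)
    {h : V → K[X]} (hh : h ∈ A) : T.indicator h ∈ A := by
  refine hA.mem_of_coeff_eq hT hh (fun x => if x = 0 then 0 else 1) fun v n => ?_
  by_cases hv : v ∈ T <;> simp [hv, Nat.cast_add_one_ne_zero]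

lemma indicator_coeff_mem (hA : DerivClosed A) (hT : T.indicator 1 ∈ monomialCoeffs A 1)
    {h : V → K[X]} (hh : h ∈ A) (n : ℕ) :
    T.indicator (fun v => (h v).coeff n) ∈ monomialCoeffs A n := by
  refine hA.mem_of_coeff_eq hT hh (fun x => if x = n + 1 then 1 else 0) fun v m => ?_
  by_cases hv : v ∈ T
  · by_cases hm : m = n
    · simp [hv, hm]
    · simp [hv, hm, coeff_monomial, Ne.symm hm]
  · simp [hv, (Nat.cast_add_one_ne_zero n : (n + 1 : K) ≠ 0).symm]

end Indicator

lemma indicator_natDegree_eq_top_mem (hA : DerivClosed A) {f : V → K[X]} (hf : f ∈ A)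
    (hadj : ∀ v, (f v).nextCoeff = 0) {k : ℕ} (hdeg : ∀ v, (f v).natDegree ≤ k + 1) :
    {v | (f v).natDegree = k + 1}.indicator 1 ∈ monomialCoeffs A 1 := by
  let g : V → K[X] := fun v => derivative^[k] (f v)
  have hg : g ∈ A := hA.iterate_derivative_mem hf k
  have hg_deg : ∀ v, (g v).natDegree ≤ 1 := fun v =>
    (natDegree_iterate_derivative _ _).trans (by have := hdeg v; omega)
  have hg_one : ∀ v, (g v).coeff 1 ≠ 0 ↔ (f v).natDegree = k + 1 := by
    intro v
    have hfact : (1 + k).descFactorial k ≠ 0 := by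
      simp [Nat.descFactorial_eq_zero_iff_lt]
    simp only [g]
    rw [coeff_iterate_derivative, smul_ne_zero_iff_right hfact, add_comm]
    exact ⟨fun h => (hdeg v).antisymm (le_natDegree_of_ne_zero h), fun h =>
      coeff_ne_zero_of_eq_degree ((degree_eq_iff_natDegree_eq_of_pos k.succ_pos).2 h)⟩
  have hg_zero : ∀ v, (g v).coeff 1 * (g v).coeff 0 = 0 := by
    intro v
    rw [mul_eq_zero, ← not_ne_iff, hg_one, or_iff_not_imp_left, not_not]
    intro h
    have := hadj v
    rw [nextCoeff_of_natDegree_pos (by omega), h, Nat.add_sub_cancel] at this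
    simp [g, coeff_iterate_derivative, this]
  have hsq : (fun v => 2 * (g v).coeff 1 ^ 2) ∈ monomialCoeffs A 1 := by
    rw [mem_monomialCoeffs]
    convert hA.derivative_mul_mem g hg g hg using 2 with v
    exact (derivative_mul_self_of_natDegree_le_one (hg_deg v) (hg_zero v)).symm
  simpa [hg_one] using hA.indicator_ne_zero_mem hsq

lemma indicator_natDegree_eq_mem_of_le (hA : DerivClosed A) {N : ℕ} {f : V → K[X]} (hf : f ∈ A)
    (hadj : ∀ v, (f v).nextCoeff = 0) (hN : ∀ v, (f v).natDegree ≤ N) {k : ℕ} (hk : k ≠ 0) :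
    {v | (f v).natDegree = k}.indicator 1 ∈ monomialCoeffs A 1 := by
  induction N generalizing f with
  | zero =>
    have : {v | (f v).natDegree = k} = ∅ := by
      refine Set.eq_empty_of_forall_notMem fun v hv => hk ?_
      exact hv.symm.trans (Nat.le_zero.1 (hN v))
    rw [this, Set.indicator_empty]
    exact zero_mem _
  | succ N ih =>
    let T : Set V := {v | (f v).natDegree = N + 1}
    have hT : T.indicator 1 ∈ monomialCoeffs A 1 := hA.indicator_natDegree_eq_top_mem hf hadj hN
    by_cases hkN : k = N + 1
    · exact hkN ▸ hT
    have hg : Tᶜ.indicator f ∈ A := by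
      rw [Set.indicator_compl]
      exact A.sub_mem hf (hA.indicator_mem hT hf)
    have hlower := ih hg (fun v => ?_) fun v => ?_
    · convert hlower using 2
      ext v
      by_cases hv : v ∈ T
      · simp [hv, hv.out, Ne.symm hkN, hk.symm]
      · simp [hv]
    · by_cases hv : v ∈ T
      · simp [hv, nextCoeff]
      · simp [hv, hadj v]
    · by_cases hv : v ∈ T
      · simp [hv]
      · simpa [hv] using Nat.le_of_lt_succ ((hN v).lt_of_ne hv)

lemma indicator_natDegree_eq_mem (hA : DerivClosed A) {f : V → K[X]} (hf : f ∈ A)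
    (hadj : ∀ v, (f v).nextCoeff = 0) {k : ℕ} (hk : k ≠ 0) :
    {v | (f v).natDegree = k}.indicator 1 ∈ monomialCoeffs A 1 := by
  obtain ⟨N, hN⟩ := Finite.exists_le fun v => (f v).natDegree
  exact hA.indicator_natDegree_eq_mem_of_le hf hadj hN hk

lemma indicator_natDegree_eq_coeff_mem (hA : DerivClosed A) {f : V → K[X]} (hf : f ∈ A)
    (hadj : ∀ v, (f v).nextCoeff = 0) {k : ℕ} (hk : k ≠ 0) (n : ℕ) :
    {v | (f v).natDegree = k}.indicator (fun v => (f v).coeff n) ∈ monomialCoeffs A 1 := by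
  set T : Set V := {v | (f v).natDegree = k}
  have hT : T.indicator 1 ∈ monomialCoeffs A 1 := hA.indicator_natDegree_eq_mem hf hadj hk
  have hcoeff := hA.indicator_coeff_mem hT hf
  obtain hn | rfl := ne_or_eq n 0
  · exact hA.mem_monomialCoeffs_one hn (hcoeff n)
  obtain rfl | hk1 := eq_or_ne k 1
  · convert (monomialCoeffs A 1).zero_mem using 1
    funext v
    by_cases hv : v ∈ T
    · have hd : (f v).natDegree = 1 := hv
      have := hadj v
      rw [nextCoeff_of_natDegree_pos (by omega), hd, Nat.sub_self] at this
      simpa [hv] using this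
    · simp [hv]
  · -- Lowering a constant to degree one is impossible, so multiply it by the leading
    -- coefficient, which moves it to degree `k - 1`, and divide afterwards.
    obtain ⟨m, rfl⟩ : ∃ m, k = m + 1 := ⟨k - 1, by omega⟩
    have hlead := hA.mem_monomialCoeffs_one hk (hcoeff (m + 1))
    have hprod := hA.mem_monomialCoeffs_one (by omega)
      (hA.mul_mem_monomialCoeffs (hcoeff (m + 1)) (hcoeff 0))
    convert hA.mul_comp_mem hlead hprod (·⁻¹) using 1
    funext v
    by_cases hv : v ∈ T
    · have hd : (f v).natDegree = m + 1 := hv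
      have hne : (f v).coeff (m + 1) ≠ 0 :=
        coeff_ne_zero_of_eq_degree ((degree_eq_iff_natDegree_eq_of_pos m.succ_pos).2 hd)
      simp only [hv, Set.indicator_of_mem, Pi.mul_apply]
      field_simp
    · simp [hv]

theorem indicator_eq_mem (hA : DerivClosed A) {f : V → K[X]} (hf : f ∈ A)
    (hadj : ∀ v, (f v).nextCoeff = 0) {p : K[X]} (hp : p.natDegree ≠ 0) :
    {v | f v = p}.indicator 1 ∈ monomialCoeffs A 1 := by
  let T : ℕ → Set V := fun j =>
    {v | (f v).natDegree = p.natDegree ∧ ∀ n < j, (f v).coeff n = p.coeff n}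
  have hT : ∀ j, (T j).indicator 1 ∈ monomialCoeffs A 1 := by
    intro j
    induction j with
    | zero => simpa [T] using hA.indicator_natDegree_eq_mem hf hadj hp
    | succ j ih =>
      have hcoeff : (T j).indicator (fun v => (f v).coeff j) ∈ monomialCoeffs A 1 := by
        convert hA.mul_mem_monomialCoeffs (m := 0) ih
          (hA.indicator_natDegree_eq_coeff_mem hf hadj hp j) using 1
        funext v
        by_cases hv : v ∈ T j
        · simp [hv, hv.1]
        · simp [hv]
      convert hA.indicator_inter_mem ih hcoeff (p.coeff j) using 2
      ext v
      simp only [T, Set.mem_ofPred_eq, Set.mem_inter_iff, Nat.forall_lt_succ_right, and_assoc]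
  convert hT (p.natDegree + 1) using 2
  ext v
  constructor
  · rintro rfl
    simp [T]
  · rintro ⟨hdeg, hcoeff⟩
    exact (ext_iff_natDegree_le hdeg.le le_rfl).2 fun n hn => hcoeff n (Nat.lt_succ_of_le hn)

end DerivClosed

end DerivClosed

lemma nextCoeff_taylor {R : Type*} [CommRing R] (r : R) (p : R[X]) :
    (taylor r p).nextCoeff = p.nextCoeff + p.natDegree * p.leadingCoeff * r := by
  rcases hp : p.natDegree with - | k
  · simp [nextCoeff, hp]
  · rw [nextCoeff_of_natDegree_pos (by simp [hp]), nextCoeff_of_natDegree_pos (by simp [hp]),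
      natDegree_taylor, hp, Nat.add_sub_cancel, leadingCoeff, hp, taylor_coeff,
      eval_eq_sum_range' (n := 2) (by have := natDegree_hasseDeriv_le p k; omega)]
    simp [Finset.sum_range_succ, hasseDeriv_coeff, add_comm 1 k]

lemma natDegree_mul_leadingCoeff_ne_zero {R : Type*} [Semiring R] [NoZeroDivisors R] [CharZero R]
    {p : R[X]} (hp : p.natDegree ≠ 0) : p.natDegree * p.leadingCoeff ≠ 0 :=
  mul_ne_zero (Nat.cast_ne_zero.2 hp) <| leadingCoeff_ne_zero.2 <|
    ne_zero_of_natDegree_gt (Nat.pos_of_ne_zero hp)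

lemma adjShift_eq_nextCoeff_div (g : ℝ[X]) :
    adjShift g = g.nextCoeff / (g.natDegree * g.leadingCoeff) := by
  by_cases hg : g.natDegree = 0
  · simp [adjShift, hg]
  · rw [adjShift, nextCoeff_of_natDegree_pos (Nat.pos_of_ne_zero hg)]

lemma adjShift_taylor (δ : ℝ) {g : ℝ[X]} (hg : g.natDegree ≠ 0) :
    adjShift (taylor δ g) = adjShift g + δ := by
  rw [adjShift_eq_nextCoeff_div, adjShift_eq_nextCoeff_div, nextCoeff_taylor, natDegree_taylor,
    leadingCoeff_taylor, add_div, mul_div_cancel_left₀ _ (natDegree_mul_leadingCoeff_ne_zero hg)]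

lemma adjRep_eq_taylor (g : ℝ[X]) : adjRep g = taylor (-adjShift g) g := by
  rw [adjRep, taylor_apply, C_neg, sub_eq_add_neg]

lemma natDegree_adjRep (g : ℝ[X]) : (adjRep g).natDegree = g.natDegree := by
  rw [adjRep_eq_taylor, natDegree_taylor]

lemma nextCoeff_adjRep (g : ℝ[X]) : (adjRep g).nextCoeff = 0 := by
  rw [adjRep_eq_taylor, nextCoeff_taylor]
  by_cases hg : g.natDegree = 0
  · simp [nextCoeff, hg]
  · rw [adjShift_eq_nextCoeff_div, mul_neg,
      mul_div_cancel₀ _ (natDegree_mul_leadingCoeff_ne_zero hg), add_neg_cancel]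

lemma adjRep_taylor (δ : ℝ) (g : ℝ[X]) : adjRep (taylor δ g) = adjRep g := by
  by_cases hg : g.natDegree = 0
  · rw [eq_C_of_natDegree_eq_zero hg, taylor_C]
  · rw [adjRep_eq_taylor, adjRep_eq_taylor, adjShift_taylor δ hg, taylor_taylor]
    congr 2
    ring

lemma polyEquiv_iff_exists_eq_taylor {f g : ℝ[X]} : PolyEquiv f g ↔ ∃ δ, f = taylor δ g := by
  refine exists_congr fun δ => ⟨fun h => Polynomial.funext fun x => ?_, fun h x => ?_⟩
  · rw [h, taylor_eval]
  · rw [h, taylor_eval]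

lemma polyEquiv_iff_adjRep_eq {f g : ℝ[X]} : PolyEquiv f g ↔ adjRep f = adjRep g := by
  rw [polyEquiv_iff_exists_eq_taylor]
  constructor
  · rintro ⟨δ, rfl⟩
    exact adjRep_taylor δ g
  · intro h
    refine ⟨adjShift f - adjShift g, ?_⟩
    calc f = taylor (adjShift f) (adjRep f) := by
          rw [adjRep_eq_taylor, taylor_taylor, add_neg_cancel, taylor_zero]
      _ = taylor (adjShift f - adjShift g) g := by
          rw [h, adjRep_eq_taylor, taylor_taylor, sub_eq_add_neg]

lemma eval_derivative_derivative_of_eval_neg {R : Type*} [CommRing R] [IsDomain R] [Infinite R]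
    {p q : R[X]} (h : ∀ x, p.eval x = q.eval (-x)) (x : R) :
    (derivative (derivative p)).eval x = (derivative (derivative q)).eval (-x) := by
  obtain rfl : p = q.comp (-X) := Polynomial.funext fun y => by simp [h]
  simp [derivative_comp]

lemma natDegree_derivative_derivative_ne_zero {R : Type*} [Semiring R] [IsAddTorsionFree R]
    {p : R[X]} (hp : 3 ≤ p.natDegree) : (derivative (derivative p)).natDegree ≠ 0 := by
  rw [natDegree_derivative, natDegree_derivative]
  omega

section VectorFields

variable {V : Type}

/-- The position `q_v` as a continuous linear form on phase space. -/
def coordQ (v : V) : Phase V →L[ℝ] ℝ :=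
  ContinuousLinearMap.proj v ∘L ContinuousLinearMap.fst ℝ (V → ℝ) (V → ℝ)

/-- The momentum `p_v` as a continuous linear form on phase space. -/
def coordP (v : V) : Phase V →L[ℝ] ℝ :=
  ContinuousLinearMap.proj v ∘L ContinuousLinearMap.snd ℝ (V → ℝ) (V → ℝ)

lemma coordQ_apply (v : V) (x : Phase V) : coordQ v x = x.1 v := rfl

lemma coordP_apply (v : V) (x : Phase V) : coordP v x = x.2 v := rfl

/-- The vector field `∑_v g_v(q_c - q_v + δ_v) ∂_{p_v}` attached to a tuple `g` of polynomials,
as a linear function of `g`. -/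
def relField (c : V) (δ : V → ℝ) : (V → ℝ[X]) →ₗ[ℝ] (Phase V → Phase V) where
  toFun g x := (0, fun v => (g v).eval (x.1 c - x.1 v + δ v))
  map_add' g h := by ext <;> simp
  map_smul' a g := by ext <;> simp

lemma relField_apply (c : V) (δ : V → ℝ) (g : V → ℝ[X]) (x : Phase V) :
    relField c δ g x = (0, fun v => (g v).eval (x.1 c - x.1 v + δ v)) := rfl

lemma relField_taylor_neg (c : V) (δ : V → ℝ) (g : V → ℝ[X]) :
    relField c δ (fun v => taylor (-δ v) (g v)) = relField c 0 g := by
  ext <;> simp [relField_apply, taylor_eval]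

lemma relField_monomial_indicator [DecidableEq V] (c : V) (δ : V → ℝ) (T : Finset V) :
    relField c δ (fun v => monomial 1 ((T : Set V).indicator 1 v)) =
      fun x => (0, ∑ w ∈ T, Pi.single w (x.1 c - x.1 w + δ w)) := by
  funext x
  refine Prod.ext rfl (funext fun v => ?_)
  by_cases hv : v ∈ T <;> simp [relField_apply, Finset.sum_apply, Finset.sum_pi_single, hv]

lemma hasFDerivAt_eval_relative [Finite V] (p : ℝ[X]) (u v : V) (δ : ℝ) (x : Phase V) :
    HasFDerivAt (fun y : Phase V => p.eval (y.1 u - y.1 v + δ))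
      ((derivative p).eval (x.1 u - x.1 v + δ) • (coordQ u - coordQ v)) x :=
  have := Fintype.ofFinite V
  (p.hasDerivAt _).comp_hasFDerivAt x (((coordQ u - coordQ v).hasFDerivAt (x := x)).add_const δ)

lemma fderiv_relField [Finite V] (c : V) (δ : V → ℝ) (g : V → ℝ[X]) (x a : Phase V) :
    fderiv ℝ (relField c δ g) x a =
      (0, fun v => (derivative (g v)).eval (x.1 c - x.1 v + δ v) * (a.1 c - a.1 v)) := by
  have := Fintype.ofFinite V
  have h : HasFDerivAt (relField c δ g) _ x := (hasFDerivAt_const (0 : V → ℝ) x).prodMk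
    (hasFDerivAt_pi.2 fun v => hasFDerivAt_eval_relative (g v) c v (δ v) x)
  rw [h.fderiv]
  rfl

variable [Fintype V]

lemma lieB_dq_eq_fderiv [DecidableEq V] (c : V) (Z : Phase V → Phase V) (x : Phase V) :
    lieB (dq c) Z x = fderiv ℝ Z x (Pi.single c 1, 0) := by
  simp [lieB, show (dq c : Phase V → Phase V) = Function.const _ (Pi.single c 1, 0) from rfl]

lemma lieB_dq_relField [DecidableEq V] {c : V} {δ : V → ℝ} {g : V → ℝ[X]} (hg : g c = 0) :
    lieB (dq c) (relField c δ g) = relField c δ fun v => derivative (g v) := by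
  funext x
  rw [lieB_dq_eq_fderiv, fderiv_relField]
  refine Prod.ext rfl (funext fun v => ?_)
  obtain rfl | hv := eq_or_ne v c
  · simp [relField_apply, hg]
  · simp [relField_apply, hv]

section Drift

variable (G : SimpleGraph V) [DecidableRel G.Adj] {U : V → ℝ → ℝ} (Vp : V → V → ℝ[X])

/-- The stiffness `U_c'' + ∑_{w ∼ c} V''_{cw}` felt by the position of `c`, which is the
`∂_{p_c}`-component of `-[∂_{q_c}, X₀]`. -/
def stiffness (U : V → ℝ → ℝ) (c : V) : Phase V → ℝ := fun x =>
  deriv (deriv (U c)) (x.1 c) + ∑ w ∈ Finset.univ.filter (fun w => G.Adj c w),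
    (derivative (derivative (Vp c w))).eval (x.1 c - x.1 w)

lemma contDiff_stiffness {c : V} (hU : ContDiff ℝ (⊤ : ℕ∞) (U c)) :
    ContDiff ℝ (⊤ : ℕ∞) (stiffness G Vp U c) := by
  have hU2 : ContDiff ℝ (⊤ : ℕ∞) (deriv (deriv (U c))) :=
    (contDiff_infty_iff_deriv.1 (contDiff_infty_iff_deriv.1 hU).2).2
  have hq : ∀ v, ContDiff ℝ (⊤ : ℕ∞) fun x : Phase V => x.1 v := fun v => (coordQ v).contDiff
  exact (hU2.comp (hq c)).add <| ContDiff.sum fun w _ =>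
    ((derivative (derivative (Vp c w))).contDiff_aeval (𝕜 := ℝ) _).comp ((hq c).sub (hq w))

variable [DecidableEq V] (γ : V → ℝ)

lemma hasFDerivAt_X0_snd (hU : ∀ v, ContDiff ℝ (⊤ : ℕ∞) (U v)) (x : Phase V) (v : V) :
    HasFDerivAt (fun y => (X0 G γ U Vp y).2 v)
      (-(γ v) • coordP v - deriv (deriv (U v)) (x.1 v) • coordQ v -
        ∑ w ∈ Finset.univ.filter (fun w => G.Adj v w),
          (derivative (derivative (Vp v w))).eval (x.1 v - x.1 w) • (coordQ v - coordQ w)) x := by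
  have hfriction : HasFDerivAt (fun y : Phase V => -(γ v) * y.2 v) (-(γ v) • coordP v) x :=
    (coordP v).hasFDerivAt.const_mul _
  have hdU : Differentiable ℝ (deriv (U v)) :=
    (contDiff_infty_iff_deriv.1 (hU v)).2.differentiable (by simp)
  have hpinning : HasFDerivAt (fun y : Phase V => deriv (U v) (y.1 v))
      (deriv (deriv (U v)) (x.1 v) • coordQ v) x :=
    (hdU _).hasDerivAt.comp_hasFDerivAt (f := fun y : Phase V => y.1 v) x (coordQ v).hasFDerivAt
  have hinteraction : ∀ w, HasFDerivAt
      (fun y : Phase V => (derivative (Vp v w)).eval (y.1 v - y.1 w))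
      ((derivative (derivative (Vp v w))).eval (x.1 v - x.1 w) • (coordQ v - coordQ w)) x :=
    fun w => by simpa using hasFDerivAt_eval_relative (derivative (Vp v w)) v w 0 x
  exact (hfriction.sub hpinning).sub (HasFDerivAt.fun_sum fun w _ => hinteraction w)

lemma fderiv_X0 (hU : ∀ v, ContDiff ℝ (⊤ : ℕ∞) (U v)) (x a : Phase V) :
    fderiv ℝ (X0 G γ U Vp) x a =
      (a.2, fun v => -(γ v) * a.2 v - deriv (deriv (U v)) (x.1 v) * a.1 v -
        ∑ w ∈ Finset.univ.filter (fun w => G.Adj v w),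
          (derivative (derivative (Vp v w))).eval (x.1 v - x.1 w) * (a.1 v - a.1 w)) := by
  have h : HasFDerivAt (X0 G γ U Vp) _ x := hasFDerivAt_snd.prodMk
    (hasFDerivAt_pi.2 (hasFDerivAt_X0_snd G Vp γ hU x))
  rw [h.fderiv]
  refine Prod.ext rfl (funext fun v => ?_)
  simp [coordQ_apply, coordP_apply]

lemma lieB_relField_X0 (hU : ∀ v, ContDiff ℝ (⊤ : ℕ∞) (U v)) (c : V) (δ : V → ℝ)
    (g : V → ℝ[X]) :
    lieB (relField c δ g) (X0 G γ U Vp) = fun x =>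
      (fun v => (g v).eval (x.1 c - x.1 v + δ v),
       fun v => -(γ v) * (g v).eval (x.1 c - x.1 v + δ v) -
        (derivative (g v)).eval (x.1 c - x.1 v + δ v) * (x.2 c - x.2 v)) := by
  funext x
  rw [lieB, fderiv_relField, fderiv_X0 G Vp γ hU]
  refine Prod.ext ?_ (funext fun v => ?_) <;> simp [relField_apply, X0]

lemma lieB_lieB_relField_X0 (hU : ∀ v, ContDiff ℝ (⊤ : ℕ∞) (U v)) {c : V} (δ : V → ℝ)
    {g h : V → ℝ[X]} (hg : g c = 0) (hh : h c = 0) :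
    lieB (relField c δ h) (lieB (relField c δ g) (X0 G γ U Vp)) =
      relField c δ fun v => derivative (g v * h v) := by
  funext x
  have hpos : ∀ v, HasFDerivAt (fun y : Phase V => (g v).eval (y.1 c - y.1 v + δ v)) _ x :=
    fun v => hasFDerivAt_eval_relative (g v) c v (δ v) x
  have hvel : ∀ v, HasFDerivAt (fun y : Phase V => y.2 c - y.2 v) (coordP c - coordP v) x :=
    fun v => (coordP c - coordP v).hasFDerivAt
  have hbracket : HasFDerivAt (lieB (relField c δ g) (X0 G γ U Vp)) _ x :=
    HasFDerivAt.congr_of_eventuallyEq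
      ((hasFDerivAt_pi.2 hpos).prodMk (hasFDerivAt_pi.2 fun v =>
        ((hpos v).const_mul (-(γ v))).sub
          ((hasFDerivAt_eval_relative (derivative (g v)) c v (δ v) x).mul (hvel v))))
      (.of_eq (lieB_relField_X0 G Vp γ hU c δ g))
  rw [lieB, fderiv_relField, hbracket.fderiv, lieB_relField_X0 G Vp γ hU]
  refine Prod.ext (funext fun v => ?_) (funext fun v => ?_)
  · simp [relField_apply, coordQ_apply]
  · simp [relField_apply, coordQ_apply, coordP_apply, hg, hh, mul_comm]

lemma sum_neighbors_mul_single_sub_single (c v : V) (k : V → ℝ) :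
    ∑ w ∈ Finset.univ.filter (fun w => G.Adj v w),
        k w * ((Pi.single c 1 : V → ℝ) v - (Pi.single c 1 : V → ℝ) w) =
      if v = c then ∑ w ∈ Finset.univ.filter (fun w => G.Adj v w), k w
      else if G.Adj c v then -k c else 0 := by
  split_ifs with hvc hadj
  · subst hvc
    refine Finset.sum_congr rfl fun w hw => ?_
    simp [(Finset.mem_filter.1 hw).2.ne']
  · rw [Finset.sum_eq_single_of_mem c (by simpa using hadj.symm)
      fun w _ hw => by simp [hvc, hw]]
    simp [hvc]
  · refine Finset.sum_eq_zero fun w hw => ?_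
    have hwc : w ≠ c := by
      rintro rfl
      exact hadj (Finset.mem_filter.1 hw).2.symm
    simp [hvc, hwc]

lemma lieB_dq_X0_add_stiffness_smul_dp (hU : ∀ v, ContDiff ℝ (⊤ : ℕ∞) (U v)) (c : V)
    (hsym : ∀ v, G.Adj c v → ∀ x : ℝ, (Vp v c).eval x = (Vp c v).eval (-x)) :
    lieB (dq c) (X0 G γ U Vp) + (fun x => stiffness G Vp U c x • dp c x) =
      relField c 0 fun v => if G.Adj c v then derivative (derivative (Vp c v)) else 0 := by
  funext x
  rw [Pi.add_apply, lieB_dq_eq_fderiv, fderiv_X0 G Vp γ hU]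
  refine Prod.ext (by simp [relField_apply, dp]) (funext fun v => ?_)
  simp only [Prod.snd_add, Pi.add_apply, sum_neighbors_mul_single_sub_single]
  obtain rfl | hvc := eq_or_ne v c
  · simp [relField_apply, dp, stiffness]
  · by_cases hadj : G.Adj c v
    · simp [relField_apply, dp, hvc, hadj, eval_derivative_derivative_of_eval_neg (hsym v hadj)]
    · simp [relField_apply, dp, hvc, hadj]

end Drift

variable [DecidableEq V]

/-- The collection `𝓜` as a real vector space; a member `Y` is needed to have `0 ∈ 𝓜`. -/
def MM.submodule {Vstar : Finset V} {X₀ Y : Phase V → Phase V} (hY : MM Vstar X₀ Y) :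
    Submodule ℝ (Phase V → Phase V) where
  carrier := {Z | MM Vstar X₀ Z}
  zero_mem' := zero_smul ℝ Y ▸ hY.smul 0
  add_mem' := MM.add
  smul_mem' a _ := MM.smul a

/-- The tuples `g` of polynomials with `∑_v g_v(q_c - q_v + δ_v) ∂_{p_v} ∈ 𝓜`; the component at
`c`, where the argument of `g_c` is constant, is required to vanish. -/
def admissible {Vstar : Finset V} {X₀ : Phase V → Phase V} {c : V} (hq : MM Vstar X₀ (dq c))
    (δ : V → ℝ) : Submodule ℝ (V → ℝ[X]) :=
  LinearMap.ker (LinearMap.proj c) ⊓ hq.submodule.comap (relField c δ)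

lemma mem_admissible {Vstar : Finset V} {X₀ : Phase V → Phase V} {c : V}
    {hq : MM Vstar X₀ (dq c)} {δ : V → ℝ} {g : V → ℝ[X]} :
    g ∈ admissible hq δ ↔ g c = 0 ∧ MM Vstar X₀ (relField c δ g) :=
  Iff.rfl

variable {G : SimpleGraph V} [DecidableRel G.Adj] {Vstar : Finset V} {γ : V → ℝ}
  {U : V → ℝ → ℝ} {Vp : V → V → ℝ[X]} {c : V}

lemma admissible_derivClosed (hU : ∀ v, ContDiff ℝ (⊤ : ℕ∞) (U v))
    (hq : MM Vstar (X0 G γ U Vp) (dq c)) (δ : V → ℝ) : DerivClosed (admissible hq δ) where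
  derivative_mem g hg := by
    obtain ⟨hgc, hg⟩ := mem_admissible.1 hg
    exact mem_admissible.2 ⟨by simp [hgc], lieB_dq_relField hgc ▸ hq.lie hg⟩
  derivative_mul_mem g hg h hh := by
    obtain ⟨hgc, hg⟩ := mem_admissible.1 hg
    obtain ⟨hhc, hh⟩ := mem_admissible.1 hh
    exact mem_admissible.2 ⟨by simp [hgc],
      lieB_lieB_relField_X0 G Vp γ hU δ hgc hhc ▸ hh.lie hg.lieX⟩

/-- The adjusting shifts `δ_{cv}` of the polynomials `V''_{cv}`. -/
def interactionShift (Vp : V → V → ℝ[X]) (c v : V) : ℝ :=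
  adjShift (derivative (derivative (Vp c v)))

lemma ft_mem_admissible (hU : ∀ v, ContDiff ℝ (⊤ : ℕ∞) (U v))
    (hsym : ∀ v, G.Adj c v → ∀ x : ℝ, (Vp v c).eval x = (Vp c v).eval (-x))
    (hc : Controllable Vstar (X0 G γ U Vp) c) :
    (fun v => if G.Adj c v then ft Vp c v else 0) ∈ admissible hc.1 (interactionShift Vp c) := by
  refine mem_admissible.2 ⟨by simp, ?_⟩
  have hft : (fun v => if G.Adj c v then ft Vp c v else 0) =
      fun v => taylor (-interactionShift Vp c v)
        (if G.Adj c v then derivative (derivative (Vp c v)) else 0) := by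
    funext v
    split_ifs
    · exact adjRep_eq_taylor _
    · simp
  rw [hft, relField_taylor_neg, ← lieB_dq_X0_add_stiffness_smul_dp G Vp γ hU c hsym]
  exact hc.1.lieX.add (hc.2.mulS _ (contDiff_stiffness G Vp (hU c)))

end VectorFields

theorem equivClass_x_field_mem_general
    {V : Type} [Fintype V] [DecidableEq V] (G : SimpleGraph V) [DecidableRel G.Adj]
    (Vstar : Finset V) (γ : V → ℝ) (U : V → ℝ → ℝ) (Vp : V → V → ℝ[X])
    (hU : ∀ v, ContDiff ℝ (⊤ : ℕ∞) (U v)) (c : V)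
    (hsym : ∀ v, G.Adj c v → ∀ x : ℝ, (Vp v c).eval x = (Vp c v).eval (-x))
    (hc : Controllable Vstar (X0 G γ U Vp) c) (p : ℝ[X]) (hp : p.natDegree ≠ 0) :
    MM Vstar (X0 G γ U Vp)
      (fun x => ((0 : V → ℝ),
        ∑ w ∈ (Tset G c).filter (fun w => PolyEquiv (derivative (derivative (Vp c w))) p),
          Pi.single w (xv Vp c w x))) := by
  let f : V → ℝ[X] := fun v => if G.Adj c v then ft Vp c v else 0
  have hf : f ∈ admissible hc.1 (interactionShift Vp c) := ft_mem_admissible hU hsym hc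
  have hadjusted : ∀ v, (f v).nextCoeff = 0 := fun v => by
    by_cases hv : G.Adj c v
    · simp [f, hv, ft, nextCoeff_adjRep]
    · simp [f, hv, nextCoeff]
  have hp' : (adjRep p).natDegree ≠ 0 := by rwa [natDegree_adjRep]
  have hclass : {v | f v = adjRep p} =
      ((Tset G c).filter fun w => PolyEquiv (derivative (derivative (Vp c w))) p : Finset V) := by
    ext v
    by_cases hv : G.Adj c v
    · simp [f, hv, Tset, polyEquiv_iff_adjRep_eq, ft]
    · simp [f, hv, Tset, (ne_zero_of_natDegree_gt (Nat.pos_of_ne_zero hp')).symm]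
  have hmem := (admissible_derivClosed hU hc.1 _).indicator_eq_mem hf hadjusted hp'
  rw [hclass] at hmem
  exact relField_monomial_indicator c (interactionShift Vp c) _ ▸ (mem_admissible.1 hmem).2

/-- Theorem 4.3, second part. If `c` is controllable, then with
`δ_{cv}` the adjusting shifts, for every equivalence class `𝒯_i` of neighbors of `c`
the vector field `∑_{v∈𝒯_i} (q_c − q_v + δ_{cv}) ∂_{p_v}` belongs to `𝓜`. -/
theorem equivClass_x_field_mem
    {V : Type} [Fintype V] [DecidableEq V] (G : SimpleGraph V) [DecidableRel G.Adj]
    (Vstar : Finset V) (γ : V → ℝ) (U : V → ℝ → ℝ) (Vp : V → V → Polynomial ℝ)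
    (hγpos : ∀ v ∈ Vstar, 0 < γ v) (hγ0 : ∀ v ∉ Vstar, γ v = 0)
    (hU : ∀ v, ContDiff ℝ (⊤ : ℕ∞) (U v))
    (hsym : ∀ u v, G.Adj u v → ∀ x : ℝ, (Vp v u).eval x = (Vp u v).eval (-x))
    (hdeg : ∀ u v, G.Adj u v → 3 ≤ (Vp u v).natDegree)
    (c : V) (hc : Controllable Vstar (X0 G γ U Vp) c) :
    ∀ v₀ ∈ Tset G c,
      MM Vstar (X0 G γ U Vp)
        (fun x => ((0 : V → ℝ),
          ∑ w ∈ (Tset G c).filter (fun w =>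
            PolyEquiv (derivative (derivative (Vp c w))) (derivative (derivative (Vp c v₀)))),
            Pi.single w (xv Vp c w x))) :=
  fun v₀ hv₀ => equivClass_x_field_mem_general G Vstar γ U Vp hU c (hsym c) hc _ <|
    natDegree_derivative_derivative_ne_zero (hdeg c v₀ (Finset.mem_filter.1 hv₀).2)
end
end

section
/- Assume the vertex c is controllable and let g_v : ℝ → ℝ, v ∈ 𝒯, be smooth functions. If the vector field ∑_{v∈𝒯} g_v(x_v) ∂_{p_v} belongs to 𝓜, then the vector field ∑_{v∈𝒯} g_v'(x_v) ∂_{p_v} belongs to 𝓜. -/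
/-!
Since `∂_{q_c}` lies in `𝓜` and is constant, its bracket with `∑_{v∈𝒯} g_v(x_v) ∂_{p_v}` lies in `𝓜`
and is the derivative of that field in the direction `q_c`. A neighbor `v` of `c` differs from `c`,
hence `∂_{q_c} x_v = 1`, and the chain rule turns the bracket into `∑_{v∈𝒯} g_v'(x_v) ∂_{p_v}`.
-/

open scoped Classical
open Polynomial

noncomputable section

section

variable {V : Type}

theorem lieB_const_left [Fintype V] (w : Phase V) (Z : Phase V → Phase V) :
    lieB (fun _ => w) Z = fun x => fderiv ℝ Z x w := by
  funext x
  simp [lieB]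

variable [DecidableEq V]

/-- The vector field `∑_{v ∈ A} f_v ∂_{p_v}` with scalar coefficient functions `f_v` on phase
space. -/
def momentumField (A : Finset V) (f : V → Phase V → ℝ) : Phase V → Phase V :=
  fun x => (0, ∑ v ∈ A, Pi.single v (f v x))

theorem momentumField_congr {A : Finset V} {f h : V → Phase V → ℝ}
    (hfh : ∀ v ∈ A, f v = h v) : momentumField A f = momentumField A h := by
  funext x
  exact Prod.ext rfl (Finset.sum_congr rfl fun v hv => by rw [hfh v hv])

theorem fderiv_momentumField_apply [Finite V] {A : Finset V} {f : V → Phase V → ℝ}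
    {x : Phase V} (hf : ∀ v ∈ A, DifferentiableAt ℝ (f v) x) (w : Phase V) :
    fderiv ℝ (momentumField A f) x w =
      momentumField A (fun v y => fderiv ℝ (f v) y w) x := by
  cases nonempty_fintype V
  have hsum : HasFDerivAt (fun y => ∑ v ∈ A, (Pi.single v (f v y) : V → ℝ))
      (∑ v ∈ A, (ContinuousLinearMap.single ℝ (fun _ => ℝ) v).comp (fderiv ℝ (f v) x)) x :=
    HasFDerivAt.fun_sum fun v hv =>
      (ContinuousLinearMap.single ℝ (fun _ => ℝ) v).hasFDerivAt.comp x (hf v hv).hasFDerivAt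
  have hfield := (hasFDerivAt_const (0 : V → ℝ) x).prodMk hsum
  unfold momentumField
  rw [hfield.fderiv]
  simp

theorem fderiv_comp_position_sub_apply_single [Finite V] {c v : V} (hvc : v ≠ c)
    {h : ℝ → ℝ} {b : ℝ} {x : Phase V} (hh : DifferentiableAt ℝ h (x.1 c - x.1 v + b)) :
    fderiv ℝ (fun y : Phase V => h (y.1 c - y.1 v + b)) x (Pi.single c 1, 0) =
      deriv h (x.1 c - x.1 v + b) := by
  cases nonempty_fintype V
  let position (u : V) : Phase V →L[ℝ] ℝ :=
    (ContinuousLinearMap.proj u).comp (ContinuousLinearMap.fst ℝ (V → ℝ) (V → ℝ))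
  have hsub : HasFDerivAt (fun y : Phase V => y.1 c - y.1 v + b) (position c - position v) x :=
    (position c - position v).hasFDerivAt.add_const b
  have hcomp : HasFDerivAt (fun y : Phase V => h (y.1 c - y.1 v + b))
      (deriv h (x.1 c - x.1 v + b) • (position c - position v)) x :=
    hh.hasDerivAt.comp_hasFDerivAt x hsub
  have hunit : (position c - position v) (Pi.single c 1, 0) = 1 := by
    simp [position, hvc]
  rw [hcomp.fderiv, _root_.smul_apply, hunit, smul_eq_mul, mul_one]

variable [Fintype V]

theorem lieB_dq_momentumField (c : V) {A : Finset V} {f : V → Phase V → ℝ}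
    (hf : ∀ v ∈ A, Differentiable ℝ (f v)) :
    lieB (dq c) (momentumField A f) =
      momentumField A (fun v x => fderiv ℝ (f v) x (Pi.single c 1, 0)) :=
  (lieB_const_left _ _).trans <| funext fun x =>
    fderiv_momentumField_apply (fun v hv => hf v hv x) _

theorem notMem_Tset_self (G : SimpleGraph V) [DecidableRel G.Adj] (c : V) :
    c ∉ Tset G c := by
  simp [Tset]

theorem derivative_field_mem_general {Vstar : Finset V}
    {X₀ : Phase V → Phase V} {c : V} (hc : MM Vstar X₀ (dq c)) {A : Finset V} (hcA : c ∉ A)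
    (δ : V → ℝ) {g : V → ℝ → ℝ} (hg : ∀ v ∈ A, Differentiable ℝ (g v))
    (hmem : MM Vstar X₀ (momentumField A fun v x => g v (x.1 c - x.1 v + δ v))) :
    MM Vstar X₀ (momentumField A fun v x => deriv (g v) (x.1 c - x.1 v + δ v)) := by
  have hdiff : ∀ v ∈ A, Differentiable ℝ fun x : Phase V => g v (x.1 c - x.1 v + δ v) :=
    fun v hv => (hg v hv).comp (by fun_prop)
  have hbracket := MM.lie hc hmem
  rw [lieB_dq_momentumField c hdiff] at hbracket
  have hchain : ∀ v ∈ A,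
      (fun x : Phase V => fderiv ℝ (fun y : Phase V => g v (y.1 c - y.1 v + δ v)) x
        (Pi.single c 1, 0)) = fun x => deriv (g v) (x.1 c - x.1 v + δ v) :=
    fun v hv => funext fun x =>
      fderiv_comp_position_sub_apply_single (ne_of_mem_of_not_mem hv hcA) (hg v hv _)
  rwa [momentumField_congr hchain] at hbracket

end

/-- Lemma 4.6. Let `c` be controllable and `g_v`, `v ∈ 𝒯`, smooth.
If `∑_{v∈𝒯} g_v(x_v) ∂_{p_v} ∈ 𝓜` then `∑_{v∈𝒯} g_v'(x_v) ∂_{p_v} ∈ 𝓜`,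
where `x_v = q_c − q_v + δ_{cv}` for real constants `δ_{cv}`. -/
theorem derivative_field_mem
    {V : Type} [Fintype V] [DecidableEq V] (G : SimpleGraph V) [DecidableRel G.Adj]
    (Vstar : Finset V) (γ : V → ℝ) (U : V → ℝ → ℝ) (Vp : V → V → Polynomial ℝ)
    (hγpos : ∀ v ∈ Vstar, 0 < γ v) (hγ0 : ∀ v ∉ Vstar, γ v = 0)
    (hU : ∀ v, ContDiff ℝ (⊤ : ℕ∞) (U v))
    (hsym : ∀ u v, G.Adj u v → ∀ x : ℝ, (Vp v u).eval x = (Vp u v).eval (-x))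
    (hdeg : ∀ u v, G.Adj u v → 3 ≤ (Vp u v).natDegree)
    (c : V) (hc : Controllable Vstar (X0 G γ U Vp) c)
    (δ : V → ℝ) (g : V → ℝ → ℝ) (hg : ∀ v, ContDiff ℝ (⊤ : ℕ∞) (g v))
    (hmem : MM Vstar (X0 G γ U Vp)
      (fun x => ((0 : V → ℝ),
        ∑ v ∈ Tset G c, Pi.single v (g v (x.1 c - x.1 v + δ v))))) :
    MM Vstar (X0 G γ U Vp)
      (fun x => ((0 : V → ℝ),
        ∑ v ∈ Tset G c, Pi.single v (deriv (g v) (x.1 c - x.1 v + δ v)))) := by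
  have hdiff : ∀ v ∈ Tset G c, Differentiable ℝ (g v) :=
    fun v _ => (hg v).differentiable (by simp)
  exact derivative_field_mem_general hc.1 (notMem_Tset_self G c) δ hdiff hmem
end
end
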